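/- Let n be a positive integer. For α ∈ IO_∞(ℤ^n_lex) and i ∈ {1,…,n} write α(i,k) = (i, α^i(k)) for (i,k) ∈ dom α. Then: (a) for every α and every i there exist integers a_i⁻(α) and a_i⁺(α) such that α^i(k) − k = a_i⁻(α) for all sufficiently small integers k and α^i(k) − k = a_i⁺(α) for all sufficiently large integers k; (b) the map H : IO_∞(ℤ^n_lex) → ℤ^{2n} given by H(α) = (a_1⁻(α), a_1⁺(α), …, a_n⁻(α), a_n⁺(α)) satisfies H(α·β) = H(α) + H(β) and is surjective; (c) H(α) = H(β) if and only if α·ε = β·ε for some idempotent ε ∈ IO_∞(ℤ^n_lex). Consequently, the quotient of IO_∞(ℤ^n_lex) by its least group congruence σ is isomorphic to the direct power (ℤ(+))^{2n}. -/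

import Mathlib

/-- Composition of partial selfmaps (left map applied first):
`dom (PComp f g) = {x ∈ dom f : f x ∈ dom g}` and `(PComp f g) x = g (f x)`. -/
def PComp {X : Type*} (f g : X → Option X) : X → Option X := fun x => (f x).bind g

/-- The identity partial selfmap (everywhere defined). -/
def PId {X : Type*} : X → Option X := fun x => some x

/-- A partial selfmap is injective. -/
def PInj {X : Type*} (f : X → Option X) : Prop :=
  ∀ ⦃x y a : X⦄, f x = some a → f y = some a → x = y

/-- A partial selfmap is monotone with respect to the relation `r`. -/
def PMono {X : Type*} (r : X → X → Prop) (f : X → Option X) : Prop :=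
  ∀ ⦃x y a b : X⦄, r x y → f x = some a → f y = some b → r a b

/-- The domain of a partial selfmap is cofinite. -/
def DomCof {X : Type*} (f : X → Option X) : Prop := {x | f x = none}.Finite

/-- The range (image) of a partial selfmap is cofinite. -/
def RanCof {X : Type*} (f : X → Option X) : Prop := {y | ∀ x, f x ≠ some y}.Finite

/-- `IOmap r f` says that `f` is a monotone (w.r.t. `r`) injective partial selfmap
with cofinite domain and cofinite image, i.e. an element of `IO_∞`. -/
def IOmap {X : Type*} (r : X → X → Prop) (f : X → Option X) : Prop :=
  PInj f ∧ PMono r f ∧ DomCof f ∧ RanCof f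

/-- The lexicographic order on `L_n × ℤ` (with `L_n = Fin n`):
`(i,m) ≤ (j,k)` iff `i < j`, or `i = j` and `m ≤ k`. -/
def lexLe (n : ℕ) (p q : Fin n × ℤ) : Prop :=
  p.1 < q.1 ∨ (p.1 = q.1 ∧ p.2 ≤ q.2)

/-- The domain of a partial selfmap, as a set. -/
def pdom {X : Type*} (f : X → Option X) : Set X := {x | ∃ y, f x = some y}

/-- The range (image) of a partial selfmap, as a set. -/
def pran {X : Type*} (f : X → Option X) : Set X := {y | ∃ x, f x = some y}

theorem fin_of_tails {n : ℕ} (S : Set (Fin n × ℤ))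
    (h1 : ∀ i, ∃ N : ℤ, ∀ k, k ≤ N → (i, k) ∉ S)
    (h2 : ∀ i, ∃ N : ℤ, ∀ k, N ≤ k → (i, k) ∉ S) : S.Finite := by
  choose A hA using h1
  choose B hB using h2
  have : S ⊆ ⋃ i, (Prod.mk i) '' (Set.Icc (A i) (B i)) := by
    rintro ⟨i, k⟩ hk
    simp only [Set.mem_iUnion]
    refine ⟨i, k, ⟨?_, ?_⟩, rfl⟩
    · by_contra hc
      exact hA i k (by omega) hk
    · by_contra hc
      exact hB i k (by omega) hk
  exact (Set.finite_iUnion fun i => (Set.finite_Icc _ _).image _).subset this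

theorem tail_hi {n : ℕ} {S : Set (Fin n × ℤ)} (h : S.Finite) (i : Fin n) :
    ∃ N : ℤ, ∀ k, N ≤ k → (i, k) ∉ S := by
  obtain ⟨M, hM⟩ := (h.image Prod.snd).bddAbove
  refine ⟨M + 1, fun k hk hS => ?_⟩
  have : k ≤ M := hM ⟨_, hS, rfl⟩
  omega

theorem tail_lo {n : ℕ} {S : Set (Fin n × ℤ)} (h : S.Finite) (i : Fin n) :
    ∃ N : ℤ, ∀ k, k ≤ N → (i, k) ∉ S := by
  obtain ⟨M, hM⟩ := (h.image Prod.snd).bddBelow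
  refine ⟨M - 1, fun k hk hS => ?_⟩
  have : M ≤ k := hM ⟨_, hS, rfl⟩
  omega

theorem lexLe_total {n : ℕ} (p q : Fin n × ℤ) : lexLe n p q ∨ lexLe n q p := by
  unfold lexLe
  rcases lt_trichotomy p.1 q.1 with h | h | h
  · exact Or.inl (Or.inl h)
  · rcases le_total p.2 q.2 with h' | h'
    · exact Or.inl (Or.inr ⟨h, h'⟩)
    · exact Or.inr (Or.inr ⟨h.symm, h'⟩)
  · exact Or.inr (Or.inl h)

theorem lexLe_antisymm {n : ℕ} {p q : Fin n × ℤ} (h1 : lexLe n p q) (h2 : lexLe n q p) :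
    p = q := by
  unfold lexLe at *
  rcases h1 with h1 | ⟨h1, h1'⟩ <;> rcases h2 with h2 | ⟨h2, h2'⟩
  · exact absurd h1 (lt_asymm h2)
  · exact absurd h2.symm h1.ne
  · exact absurd h1.symm h2.ne
  · exact Prod.ext h1 (le_antisymm h1' h2')

theorem io_reflect {n : ℕ} {f : Fin n × ℤ → Option (Fin n × ℤ)} (hf : IOmap (lexLe n) f)
    {x y a b : Fin n × ℤ} (hx : f x = some a) (hy : f y = some b) (h : lexLe n a b) :
    lexLe n x y := by
  rcases lexLe_total x y with h' | h'
  · exact h'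
  · have := lexLe_antisymm h (hf.2.1 h' hy hx)
    subst this
    have := hf.1 hx hy
    subst this
    exact h'

theorem io_line_aux {n : ℕ} {f : Fin n × ℤ → Option (Fin n × ℤ)} (hf : IOmap (lexLe n) f)
    {x y a b : Fin n × ℤ} (hx : f x = some a) (hy : f y = some b) (h : x.1 = y.1)
    (hle : lexLe n x y) : a.1 = b.1 := by
  rcases hf.2.1 hle hx hy with hab | hab
  swap
  · exact hab.1
  exfalso
  have hT : {c | some c ∈ (fun m => f (x.1, m)) '' Set.Icc x.2 y.2}.Finite :=
    Set.Finite.preimage (Option.some_injective _).injOn ((Set.finite_Icc _ _).image _)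
  obtain ⟨N, hN⟩ := tail_hi hT a.1
  obtain ⟨M, hM⟩ := tail_hi hf.2.2.2 a.1
  set k := max (max N M) a.2 with hk
  have h1 := hN k (by omega)
  have h2 := hM k (by omega)
  simp only [Set.mem_setOf_eq, not_forall, not_not] at h2
  obtain ⟨p, hp⟩ := h2
  apply h1
  have e1 : lexLe n x p := io_reflect hf hx hp (Or.inr ⟨rfl, by simp only; omega⟩)
  have e2 : lexLe n p y := io_reflect hf hp hy (Or.inl hab)
  have hp1 : p.1 = x.1 := by
    apply le_antisymm
    · rw [h]
      rcases e2 with e | e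
      · exact e.le
      · exact e.1.le
    · rcases e1 with e | e
      · exact e.le
      · exact e.1.le
  refine ⟨p.2, ⟨?_, ?_⟩, ?_⟩
  · rcases e1 with e | e
    · exact absurd hp1.symm e.ne
    · exact e.2
  · rcases e2 with e | e
    · exact absurd (hp1.trans h) e.ne
    · exact e.2
  · simp only [← hp1]
    exact hp

theorem io_line {n : ℕ} {f : Fin n × ℤ → Option (Fin n × ℤ)} (hf : IOmap (lexLe n) f)
    {x y a b : Fin n × ℤ} (hx : f x = some a) (hy : f y = some b) (h : x.1 = y.1) :
    a.1 = b.1 := by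
  rcases lexLe_total x y with h' | h'
  · exact io_line_aux hf hx hy h h'
  · exact (io_line_aux hf hy hx h.symm h').symm

theorem io_fst {n : ℕ} {f : Fin n × ℤ → Option (Fin n × ℤ)} (hf : IOmap (lexLe n) f)
    {x a : Fin n × ℤ} (hx : f x = some a) : a.1 = x.1 := by
  have h0 : ∀ i : Fin n, ∃ k : ℤ, ∃ y, f (i, k) = some y := by
    intro i
    obtain ⟨N, hN⟩ := tail_hi hf.2.2.1 i
    exact ⟨N, Option.ne_none_iff_exists'.1 (hN N le_rfl)⟩
  choose k φ hφ using h0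
  have hmono : Monotone (fun i => (φ i).1) := by
    intro i j hij
    rcases hij.lt_or_eq with h | h
    · rcases hf.2.1 (Or.inl h : lexLe n (i, k i) (j, k j)) (hφ i) (hφ j) with h' | h'
      · exact h'.le
      · exact h'.1.le
    · rw [h]
  have hsurj : Function.Surjective (fun i => (φ i).1) := by
    intro j
    obtain ⟨M, hM⟩ := tail_hi hf.2.2.2 j
    have h2 := hM M le_rfl
    simp only [Set.mem_setOf_eq, not_forall, not_not] at h2
    obtain ⟨p, hp⟩ := h2
    exact ⟨p.1, io_line hf (hφ p.1) hp rfl⟩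
  have hinj := Finite.injective_iff_surjective.2 hsurj
  have hs := hmono.strictMono_of_injective hinj
  have : (fun i => (φ i).1) = id := by
    apply (StrictMono.range_inj hs strictMono_id).1
    rw [hsurj.range_eq, Set.range_id]
  have h3 := congrFun this x.1
  simp only [id] at h3
  rw [← h3]
  exact io_line hf hx (hφ x.1) rfl

theorem shift_tail (R : ℤ → ℤ → Prop) (hR : ∀ a b c d, R a b → R c d → (a < c ↔ b < d))
    (N M : ℤ) (hN : ∀ k, N ≤ k → ∃ m, R k m) (hM : ∀ m, M ≤ m → ∃ k, R k m) :
    ∃ K a : ℤ, ∀ k, K ≤ k → R k (k + a) := by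
  obtain ⟨m0, hm0⟩ := hN N le_rfl
  have hgrow : ∀ t : ℕ, ∀ m, R (N + t) m → m0 + t ≤ m := by
    intro t
    induction t with
    | zero =>
      intro m hm
      have := (hR _ _ _ _ hm hm0).2
      simp at this
      push_cast
      omega
    | succ t ih =>
      intro m hm
      obtain ⟨m', hm'⟩ := hN (N + t) (by omega)
      have h1 := ih m' hm'
      have := (hR _ _ _ _ hm' hm).1 (by push_cast; omega)
      push_cast
      omega
  have hbig : ∀ k m, N + max 0 (M - m0) ≤ k → R k m → M ≤ m := by
    intro k m hk hkm
    have := hgrow (k - N).toNat m (by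
      have : N + ((k - N).toNat : ℤ) = k := by omega
      rw [this]; exact hkm)
    omega
  set K := N + max 0 (M - m0) with hK
  obtain ⟨mK, hmK⟩ := hN K (by omega)
  refine ⟨K, mK - K, fun k hk => ?_⟩
  induction k, hk using Int.le_induction with
  | base => simpa using hmK
  | succ k hk ih =>
    obtain ⟨m, hm⟩ := hN (k + 1) (by omega)
    have h1 := (hR _ _ _ _ ih hm).1 (by omega)
    have h2 := hbig k _ hk ih
    obtain ⟨p, hp⟩ := hM (k + (mK - K) + 1) (by omega)
    have h3 := (hR _ _ _ _ ih hp).2 (by omega)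
    have h4 := (hR _ _ _ _ hp hm).2
    have : m = k + 1 + (mK - K) := by
      by_contra hc
      have := h4 (by omega)
      omega
    rw [← this]
    exact hm

theorem io_strict {n : ℕ} {f : Fin n × ℤ → Option (Fin n × ℤ)} (hf : IOmap (lexLe n) f)
    (i : Fin n) (a b c d : ℤ) (h1 : f (i, a) = some (i, b)) (h2 : f (i, c) = some (i, d)) :
    a < c ↔ b < d := by
  have e : ∀ p q : ℤ, lexLe n (i, p) (i, q) ↔ p ≤ q := by
    intro p q
    simp [lexLe]
  have h3 : c ≤ a ↔ d ≤ b := by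
    rw [← e, ← e]
    exact ⟨fun h => hf.2.1 h h2 h1, fun h => io_reflect hf h2 h1 h⟩
  omega

theorem io_dom_some {n : ℕ} {f : Fin n × ℤ → Option (Fin n × ℤ)} (hf : IOmap (lexLe n) f)
    {i : Fin n} {k : ℤ} (h : (i, k) ∉ {x | f x = none}) : ∃ m, f (i, k) = some (i, m) := by
  obtain ⟨⟨j, m⟩, hy⟩ := Option.ne_none_iff_exists'.1 h
  have : j = i := io_fst hf hy
  subst this
  exact ⟨m, hy⟩

theorem io_ran_some {n : ℕ} {f : Fin n × ℤ → Option (Fin n × ℤ)} (hf : IOmap (lexLe n) f)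
    {i : Fin n} {m : ℤ} (h : (i, m) ∉ {y | ∀ x, f x ≠ some y}) :
    ∃ k, f (i, k) = some (i, m) := by
  simp only [Set.mem_setOf_eq, not_forall, not_not] at h
  obtain ⟨⟨j, k⟩, hy⟩ := h
  have : i = j := io_fst hf hy
  subst this
  exact ⟨k, hy⟩

theorem io_hi {n : ℕ} {f : Fin n × ℤ → Option (Fin n × ℤ)} (hf : IOmap (lexLe n) f)
    (i : Fin n) : ∃ a K : ℤ, ∀ k, K ≤ k → f (i, k) = some (i, k + a) := by
  obtain ⟨N, hN⟩ := tail_hi hf.2.2.1 i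
  obtain ⟨M, hM⟩ := tail_hi hf.2.2.2 i
  obtain ⟨K, a, h⟩ := shift_tail (fun k m => f (i, k) = some (i, m)) (io_strict hf i) N M
    (fun k hk => io_dom_some hf (hN k hk)) (fun m hm => io_ran_some hf (hM m hm))
  exact ⟨a, K, h⟩

theorem io_lo {n : ℕ} {f : Fin n × ℤ → Option (Fin n × ℤ)} (hf : IOmap (lexLe n) f)
    (i : Fin n) : ∃ a K : ℤ, ∀ k, k ≤ K → f (i, k) = some (i, k + a) := by
  obtain ⟨N, hN⟩ := tail_lo hf.2.2.1 i
  obtain ⟨M, hM⟩ := tail_lo hf.2.2.2 i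
  obtain ⟨K, a, h⟩ := shift_tail (fun k m => f (i, -k) = some (i, -m))
    (fun a b c d h1 h2 => by have := io_strict hf i _ _ _ _ h2 h1; omega) (-N) (-M)
    (fun k hk => by
      obtain ⟨m, hm⟩ := io_dom_some hf (hN (-k) (by omega))
      exact ⟨-m, by simpa using hm⟩)
    (fun m hm => by
      obtain ⟨k, hk⟩ := io_ran_some hf (hM (-m) (by omega))
      exact ⟨-k, by simpa using hk⟩)
  refine ⟨-a, -K, fun k hk => ?_⟩
  have := h (-k) (by omega)
  rw [neg_neg] at this
  rw [this]
  congr 2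
  omega

theorem io_comp {X : Type*} {r : X → X → Prop} {f g : X → Option X} (hf : IOmap r f)
    (hg : IOmap r g) : IOmap r (PComp f g) := by
  obtain ⟨f1, f2, f3, f4⟩ := hf
  obtain ⟨g1, g2, g3, g4⟩ := hg
  have key : ∀ x a, PComp f g x = some a ↔ ∃ b, f x = some b ∧ g b = some a := by
    intro x a
    simp [PComp, Option.bind_eq_some_iff]
  refine ⟨?_, ?_, ?_, ?_⟩
  · intro x y a hx hy
    obtain ⟨b, hb, hb'⟩ := (key _ _).1 hx
    obtain ⟨c, hc, hc'⟩ := (key _ _).1 hy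
    have := g1 hb' hc'
    subst this
    exact f1 hb hc
  · intro x y a b hxy hx hy
    obtain ⟨c, hc, hc'⟩ := (key _ _).1 hx
    obtain ⟨d, hd, hd'⟩ := (key _ _).1 hy
    exact g2 (f2 hxy hc hd) hc' hd'
  · have hfin : {x | f x ∈ some '' {y | g y = none}}.Finite := by
      refine Set.Finite.preimage ?_ (g3.image some)
      rintro x ⟨b, _, hb⟩ y _ hxy
      exact f1 hb.symm (hxy ▸ hb.symm)
    refine (f3.union hfin).subset ?_
    intro x hx
    rcases hfx : f x with _ | b
    · exact Or.inl hfx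
    · right
      refine ⟨b, ?_, hfx.symm⟩
      simpa [PComp, hfx] using hx
  · have hfin : {y | some y ∈ g '' {y | ∀ x, f x ≠ some y}}.Finite :=
      Set.Finite.preimage (Option.some_injective _).injOn (f4.image g)
    refine (g4.union hfin).subset ?_
    intro y hy
    by_cases h : ∀ x, g x ≠ some y
    · exact Or.inl h
    · right
      push Not at h
      obtain ⟨b, hb⟩ := h
      exact ⟨b, fun x hx => hy x ((key _ _).2 ⟨b, hx, hb⟩), hb⟩

open Classical in
/-- partial identity off a set -/
noncomputable def pidOff {X : Type*} (S : Set X) : X → Option X :=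
  fun x => if x ∈ S then none else some x

theorem pidOff_some {X : Type*} {S : Set X} {x a : X} :
    pidOff S x = some a ↔ x ∉ S ∧ x = a := by
  unfold pidOff
  split_ifs with h <;> simp [h]

theorem pidOff_none {X : Type*} {S : Set X} {x : X} : pidOff S x = none ↔ x ∈ S := by
  unfold pidOff
  split_ifs with h <;> simp [h]

theorem pidOff_io {X : Type*} {r : X → X → Prop} {S : Set X} (hS : S.Finite) :
    IOmap r (pidOff S) := by
  refine ⟨?_, ?_, ?_, ?_⟩
  · intro x y a hx hy
    exact (pidOff_some.1 hx).2.trans (pidOff_some.1 hy).2.symm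
  · intro x y a b h hx hy
    rwa [← (pidOff_some.1 hx).2, ← (pidOff_some.1 hy).2]
  · exact hS.subset fun x hx => pidOff_none.1 hx
  · refine hS.subset fun x hx => ?_
    by_contra hc
    exact hx x (pidOff_some.2 ⟨hc, rfl⟩)

theorem pidOff_idem {X : Type*} (S : Set X) : PComp (pidOff S) (pidOff S) = pidOff S := by
  funext x
  by_cases h : x ∈ S <;> simp [PComp, pidOff, h]

theorem exists_sigma {X : Type*} {r : X → X → Prop} {f g : X → Option X}
    (h : {x | f x ≠ g x}.Finite) :
    ∃ e, IOmap r e ∧ PComp e e = e ∧ PComp f e = PComp g e := by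
  have hS : {y | some y ∈ f '' {x | f x ≠ g x} ∪ g '' {x | f x ≠ g x}}.Finite :=
    Set.Finite.preimage (Option.some_injective _).injOn ((h.image f).union (h.image g))
  refine ⟨_, pidOff_io hS, pidOff_idem _, ?_⟩
  funext x
  by_cases hx : f x = g x
  · simp [PComp, hx]
  · have h1 : ∀ u : Option X, u = f x ∨ u = g x → u.bind (pidOff {y | some y ∈ f '' {x | f x ≠ g x} ∪ g '' {x | f x ≠ g x}}) = none := by
      intro u hu
      rcases u with _ | y
      · rfl
      · apply pidOff_none.2
        rcases hu with hu | hu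
        · exact Or.inl ⟨x, hx, hu.symm⟩
        · exact Or.inr ⟨x, hx, hu.symm⟩
    exact (h1 _ (Or.inl rfl)).trans (h1 _ (Or.inr rfl)).symm

/-- A map with prescribed translation constants. -/
def shiftMap {n : ℕ} (v : Fin n → ℤ × ℤ) : Fin n × ℤ → Option (Fin n × ℤ) := fun x =>
  if x.2 < -(|(v x.1).1| + |(v x.1).2|) then some (x.1, x.2 + (v x.1).1)
  else if |(v x.1).1| + |(v x.1).2| < x.2 then some (x.1, x.2 + (v x.1).2)
  else none

theorem shiftMap_some {n : ℕ} {v : Fin n → ℤ × ℤ} {i j : Fin n} {k m : ℤ} :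
    shiftMap v (i, k) = some (j, m) ↔ i = j ∧
      ((k < -(|(v i).1| + |(v i).2|) ∧ m = k + (v i).1) ∨
       (|(v i).1| + |(v i).2| < k ∧ m = k + (v i).2)) := by
  have h1 := abs_nonneg (v i).1
  have h2 := abs_nonneg (v i).2
  unfold shiftMap
  simp only
  split_ifs with ha hb
  · simp only [Option.some.injEq, Prod.mk.injEq]
    constructor
    · rintro ⟨h, h'⟩; exact ⟨h, Or.inl ⟨ha, h'.symm⟩⟩
    · rintro ⟨h, h' | h'⟩
      · exact ⟨h, h'.2.symm⟩
      · omega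
  · simp only [Option.some.injEq, Prod.mk.injEq]
    constructor
    · rintro ⟨h, h'⟩; exact ⟨h, Or.inr ⟨hb, h'.symm⟩⟩
    · rintro ⟨h, h' | h'⟩
      · omega
      · exact ⟨h, h'.2.symm⟩
  · constructor
    · intro h; cases h
    · rintro ⟨h, h' | h'⟩ <;> omega

theorem shiftMap_io {n : ℕ} (v : Fin n → ℤ × ℤ) : IOmap (lexLe n) (shiftMap v) := by
  have hb : ∀ i, (v i).1 ≤ |(v i).1| ∧ -(v i).1 ≤ |(v i).1| ∧
      (v i).2 ≤ |(v i).2| ∧ -(v i).2 ≤ |(v i).2| := fun i =>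
    ⟨le_abs_self _, neg_le_abs _, le_abs_self _, neg_le_abs _⟩
  refine ⟨?_, ?_, ?_, ?_⟩
  · rintro ⟨i, k⟩ ⟨j, l⟩ ⟨s, m⟩ hx hy
    obtain ⟨rfl, hx⟩ := shiftMap_some.1 hx
    obtain ⟨rfl, hy⟩ := shiftMap_some.1 hy
    have := hb j
    have : k = l := by omega
    rw [this]
  · rintro ⟨i, k⟩ ⟨j, l⟩ ⟨s, m⟩ ⟨t, p⟩ h hx hy
    obtain ⟨rfl, hx⟩ := shiftMap_some.1 hx
    obtain ⟨rfl, hy⟩ := shiftMap_some.1 hy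
    rcases h with h | ⟨h, h'⟩
    · exact Or.inl h
    · simp only at h h'
      subst h
      have := hb i
      exact Or.inr ⟨rfl, by simp only; omega⟩
  · apply fin_of_tails
    · intro i
      refine ⟨-(|(v i).1| + |(v i).2|) - 1, fun k hk hS => ?_⟩
      have := (shiftMap_some (v := v) (i := i) (k := k)).2 ⟨rfl, Or.inl ⟨by omega, rfl⟩⟩
      rw [Set.mem_setOf_eq, this] at hS
      cases hS
    · intro i
      refine ⟨(|(v i).1| + |(v i).2|) + 1, fun k hk hS => ?_⟩
      have := (shiftMap_some (v := v) (i := i) (k := k)).2 ⟨rfl, Or.inr ⟨by omega, rfl⟩⟩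
      rw [Set.mem_setOf_eq, this] at hS
      cases hS
  · apply fin_of_tails
    · intro i
      refine ⟨-(|(v i).1| + |(v i).2|) - 1 + (v i).1, fun k hk hS => ?_⟩
      exact hS (i, k - (v i).1) (shiftMap_some.2 ⟨rfl, Or.inl ⟨by omega, by omega⟩⟩)
    · intro i
      refine ⟨(|(v i).1| + |(v i).2|) + 1 + (v i).2, fun k hk hS => ?_⟩
      exact hS (i, k - (v i).2) (shiftMap_some.2 ⟨rfl, Or.inr ⟨by omega, by omega⟩⟩)

theorem hi_unique {n : ℕ} {f : Fin n × ℤ → Option (Fin n × ℤ)} {i : Fin n} {a b K L : ℤ}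
    (h1 : ∀ k, K ≤ k → f (i, k) = some (i, k + a))
    (h2 : ∀ k, L ≤ k → f (i, k) = some (i, k + b)) : a = b := by
  have := (h1 (max K L) (by omega)).symm.trans (h2 (max K L) (by omega))
  simpa using this

theorem lo_unique {n : ℕ} {f : Fin n × ℤ → Option (Fin n × ℤ)} {i : Fin n} {a b K L : ℤ}
    (h1 : ∀ k, k ≤ K → f (i, k) = some (i, k + a))
    (h2 : ∀ k, k ≤ L → f (i, k) = some (i, k + b)) : a = b := by
  have := (h1 (min K L) (by omega)).symm.trans (h2 (min K L) (by omega))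
  simpa using this

/-- The quotient of `IO_∞(ℤ^n_lex)` by its least group congruence `σ` is isomorphic to
`(ℤ(+))^{2n}`: there is a map `H` assigning to each `α ∈ IO_∞(ℤ^n_lex)` and each line
`i` the pair `(a_i⁻(α), a_i⁺(α))` of its eventual translation constants (these exist),
and `H` is additive (`H(α·β) = H(α) + H(β)`, in particular `α·β ∈ IO_∞(ℤ^n_lex)`),
surjective onto `(ℤ × ℤ)^n ≅ ℤ^{2n}`, and `H(α) = H(β)` iff `α σ β`. -/
theorem stmt13 (n : ℕ) (hn : 0 < n) :
    ∃ H : {f : Fin n × ℤ → Option (Fin n × ℤ) // IOmap (lexLe n) f} → (Fin n → ℤ × ℤ),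
      (∀ f : {f : Fin n × ℤ → Option (Fin n × ℤ) // IOmap (lexLe n) f}, ∀ i : Fin n,
        (∃ N : ℤ, ∀ k : ℤ, k ≤ N → ∃ m : ℤ, f.1 (i, k) = some (i, m) ∧ m - k = (H f i).1) ∧
        (∃ N : ℤ, ∀ k : ℤ, N ≤ k → ∃ m : ℤ, f.1 (i, k) = some (i, m) ∧ m - k = (H f i).2)) ∧
      (∀ f g : {f : Fin n × ℤ → Option (Fin n × ℤ) // IOmap (lexLe n) f},
        ∃ h : IOmap (lexLe n) (PComp f.1 g.1), H ⟨PComp f.1 g.1, h⟩ = H f + H g) ∧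
      Function.Surjective H ∧
      (∀ f g : {f : Fin n × ℤ → Option (Fin n × ℤ) // IOmap (lexLe n) f},
        H f = H g ↔
          ∃ e, IOmap (lexLe n) e ∧ PComp e e = e ∧ PComp f.1 e = PComp g.1 e) := by
  choose A KA hA using fun (f : {f : Fin n × ℤ → Option (Fin n × ℤ) // IOmap (lexLe n) f}) =>
    io_lo f.2
  choose B KB hB using fun (f : {f : Fin n × ℤ → Option (Fin n × ℤ) // IOmap (lexLe n) f}) =>
    io_hi f.2
  have hadd : ∀ f g : {f : Fin n × ℤ → Option (Fin n × ℤ) // IOmap (lexLe n) f},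
      ∃ h : IOmap (lexLe n) (PComp f.1 g.1),
        (fun i => (A ⟨PComp f.1 g.1, h⟩ i, B ⟨PComp f.1 g.1, h⟩ i)) =
          (fun i => (A f i, B f i)) + (fun i => (A g i, B g i)) := by
    intro f g
    refine ⟨io_comp f.2 g.2, ?_⟩
    funext i
    refine Prod.ext ?_ ?_
    · refine lo_unique (hA ⟨PComp f.1 g.1, io_comp f.2 g.2⟩ i)
        (L := min (KA f i) (KA g i - A f i)) (fun k hk => ?_)
      simp only [PComp, hA f i k (by omega), Option.bind_some,
        hA g i (k + A f i) (by omega), Pi.add_apply, Prod.fst_add, add_assoc]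
    · refine hi_unique (hB ⟨PComp f.1 g.1, io_comp f.2 g.2⟩ i)
        (L := max (KB f i) (KB g i - B f i)) (fun k hk => ?_)
      simp only [PComp, hB f i k (by omega), Option.bind_some,
        hB g i (k + B f i) (by omega), Pi.add_apply, Prod.snd_add, add_assoc]
  refine ⟨fun f i => (A f i, B f i), ?_, hadd, ?_, ?_⟩
  · intro f i
    exact ⟨⟨KA f i, fun k hk => ⟨_, hA f i k hk, by simp⟩⟩,
      ⟨KB f i, fun k hk => ⟨_, hB f i k hk, by simp⟩⟩⟩
  · intro v
    refine ⟨⟨shiftMap v, shiftMap_io v⟩, ?_⟩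
    funext i
    refine Prod.ext ?_ ?_
    · exact lo_unique (hA ⟨shiftMap v, shiftMap_io v⟩ i)
        (L := -(|(v i).1| + |(v i).2|) - 1)
        (fun k hk => shiftMap_some.2 ⟨rfl, Or.inl ⟨by omega, rfl⟩⟩)
    · exact hi_unique (hB ⟨shiftMap v, shiftMap_io v⟩ i)
        (L := (|(v i).1| + |(v i).2|) + 1)
        (fun k hk => shiftMap_some.2 ⟨rfl, Or.inr ⟨by omega, rfl⟩⟩)
  · intro f g
    constructor
    · intro h
      apply exists_sigma
      have h' : ∀ i, A f i = A g i ∧ B f i = B g i := fun i => by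
        have := congrFun h i
        simpa using this
      apply fin_of_tails
      · intro i
        refine ⟨min (KA f i) (KA g i), fun k hk hS => hS ?_⟩
        rw [hA f i k (by omega), hA g i k (by omega), (h' i).1]
      · intro i
        refine ⟨max (KB f i) (KB g i), fun k hk hS => hS ?_⟩
        rw [hB f i k (by omega), hB g i k (by omega), (h' i).2]
    · rintro ⟨e, he, _, hfe⟩
      obtain ⟨h1, e1⟩ := hadd f ⟨e, he⟩
      obtain ⟨h2, e2⟩ := hadd g ⟨e, he⟩
      have hs : (⟨PComp f.1 e, h1⟩ : {f : Fin n × ℤ → Option (Fin n × ℤ) // IOmap (lexLe n) f})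
          = ⟨PComp g.1 e, h2⟩ := Subtype.ext hfe
      simp only [hs] at e1
      exact add_right_cancel (e1.symm.trans e2)
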